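/- arXiv:1902.03887 — 2 statements merged into one kernel-verified Lean document; each statement's English description precedes it below -/
import Mathlib

section
/- For the uniform probability distribution P on the boundary L of the regular hexagon with vertices (0,0), (1,0), (3/2,√3/2), (1,√3), (0,√3), (−1/2,√3/2), the set {(37/32, 9√3/32), (1/2, 15√3/16), (−5/32, 9√3/32)} forms an optimal set of three-means, and the quantization error for three-means is V₃(P) = 199/768. -/
open MeasureTheory Real Filter
open scoped ENNReal

noncomputable section

/-- The plane `ℝ²` with the Euclidean norm. -/
abbrev E2 : Type := EuclideanSpace ℝ (Fin 2)

/-- The point `(a, b)` of `ℝ²`. -/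
def pt (a b : ℝ) : E2 := !₂[a, b]

/-- The `n`th quantization error of a Borel probability measure `P` on `ℝ²`:
the infimum of `∫ min_{a ∈ α} ‖x - a‖² dP(x)` over all (nonempty) finite sets
`α ⊆ ℝ²` with at most `n` elements. -/
def quantErr (P : Measure E2) (n : ℕ) : ℝ :=
  sInf {v : ℝ | ∃ α : Set E2, α.Finite ∧ α.Nonempty ∧ α.ncard ≤ n ∧
    v = ∫ x, sInf ((fun a => ‖x - a‖ ^ 2) '' α) ∂P}

/-- `α` is an optimal set of `n`-means for `P` if it attains the `n`th
quantization error. -/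
def IsOptimalSet (P : Measure E2) (n : ℕ) (α : Set E2) : Prop :=
  α.Finite ∧ α.Nonempty ∧ α.ncard ≤ n ∧
    (∫ x, sInf ((fun a => ‖x - a‖ ^ 2) '' α) ∂P) = quantErr P n

/-- The boundary `L` of the regular hexagon with vertices `O(0,0)`, `A₁(1,0)`,
`A₂(3/2,√3/2)`, `A₃(1,√3)`, `A₄(0,√3)`, `A₅(-1/2,√3/2)`. -/
def hexL : Set E2 :=
  segment ℝ (pt 0 0) (pt 1 0) ∪ segment ℝ (pt 1 0) (pt (3/2) (Real.sqrt 3/2)) ∪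
  segment ℝ (pt (3/2) (Real.sqrt 3/2)) (pt 1 (Real.sqrt 3)) ∪
  segment ℝ (pt 1 (Real.sqrt 3)) (pt 0 (Real.sqrt 3)) ∪
  segment ℝ (pt 0 (Real.sqrt 3)) (pt (-(1/2)) (Real.sqrt 3/2)) ∪
  segment ℝ (pt (-(1/2)) (Real.sqrt 3/2)) (pt 0 0)

/-- The uniform probability distribution on `hexL`: density `1/6` with respect
to the one-dimensional Hausdorff (arc-length) measure on `hexL`. -/
def hexP : Measure E2 := (6 : ℝ≥0∞)⁻¹ • (μH[1] : Measure E2).restrict hexL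

lemma quad_nonneg (A B C c : ℝ) (hB : 0 < B) (h : A ^ 2 ≤ 4 * B * C) : 0 ≤ B * c ^ 2 - A * c + C := by
  have h1 : 0 ≤ 4 * B * (B * c ^ 2 - A * c + C) := by nlinarith [sq_nonneg (2 * B * c - A)]
  have h2 : 0 < 4 * B := by linarith
  exact nonneg_of_mul_nonneg_right h1 h2

lemma lin_nonneg (u v x0 x1 x : ℝ) (h0 : x0 ≤ x) (h1 : x ≤ x1) (f0 : 0 ≤ u + v * x0)
    (f1 : 0 ≤ u + v * x1) : 0 ≤ u + v * x := by
  rcases le_total 0 v with hv | hv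
  · nlinarith
  · nlinarith

lemma case2 (s t c : ℝ) (hs : 0 ≤ s) (hs1 : s ≤ 1) (ht : 0 ≤ t) (ht1 : t ≤ 1)
    (h : c * (1 - s * t) = c ^ 2 * ((1 + s) ^ 2 + (1 + t) ^ 2 - (1 + s) * (1 + t)) / 3 + 21 / 256) :
    c * ((1 + s) * (1 + t) * (s + t)) ≤ 63 / 32 := by
  obtain ⟨g, hg⟩ : ∃ g, g = s + t := ⟨_, rfl⟩
  obtain ⟨m, hm⟩ : ∃ m, m = s * t := ⟨_, rfl⟩
  have hg0 : 0 ≤ g := by linarith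
  have hg2 : g ≤ 2 := by linarith
  have hm0 : 0 ≤ m := by rw [hm]; positivity
  have hm1 : g - 1 ≤ m := by rw [hm, hg]; nlinarith
  have hm2 : m ≤ g ^ 2 / 4 := by rw [hm, hg]; nlinarith [sq_nonneg (s - t)]
  have key : 0 ≤ (2 * (1 + g) * (1 + g + g ^ 2) / 3 * c ^ 2 - (2 + g) * (1 + g) * c +
      (63 / 32 + 21 * (1 + g) / 128)) + ((2 + g) * c - 2 * (1 + g) * c ^ 2) * m := by
    have top : 0 ≤ (2 * (1 + g) * (1 + g + g ^ 2) / 3 * c ^ 2 - (2 + g) * (1 + g) * c +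
      (63 / 32 + 21 * (1 + g) / 128)) + ((2 + g) * c - 2 * (1 + g) * c ^ 2) * (g ^ 2 / 4) := by
      have := quad_nonneg ((2 + g) * (1 + g - g ^ 2 / 4)) (2 * (1 + g) * ((2 + g) ^ 2 / 4) / 3)
        (63 / 32 + 21 * (1 + g) / 128) c (by positivity) (by
          have e : (1 + g - g ^ 2 / 4) ^ 2 ≤ 2 / 3 * (1 + g) * (63 / 32 + 21 * (1 + g) / 128) := by
            have : 0 ≤ (g - 1) ^ 2 * (-g ^ 2 / 16 + 3 * g / 8 + 27 / 64 ) := by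
              apply mul_nonneg (sq_nonneg _); nlinarith
            nlinarith
          have := mul_le_mul_of_nonneg_left e (sq_nonneg (2 + g))
          nlinarith)
      linarith
    rcases le_total g 1 with hg1 | hg1
    · refine lin_nonneg _ _ 0 (g ^ 2 / 4) m hm0 hm2 ?_ top
      have := quad_nonneg ((2 + g) * (1 + g)) (2 * (1 + g) * (1 + g + g ^ 2) / 3)
        (63 / 32 + 21 * (1 + g) / 128) c (by positivity) (by
          have e : (2 + g) ^ 2 * (1 + g) ≤ 8 / 3 * (1 + g + g ^ 2) * (63 / 32 + 21 * (1 + g) / 128) := by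
            nlinarith [mul_nonneg hg0 (sub_nonneg.2 hg1), mul_nonneg (mul_nonneg hg0 hg0) (sub_nonneg.2 hg1)]
          have := mul_le_mul_of_nonneg_left e (by linarith : 0 ≤ 1 + g)
          nlinarith)
      linarith
    · refine lin_nonneg _ _ (g - 1) (g ^ 2 / 4) m hm1 hm2 ?_ top
      have := quad_nonneg ((2 + g) * 2) (2 * (1 + g) * (4 - 2 * g + g ^ 2) / 3)
        (63 / 32 + 21 * (1 + g) / 128) c (by
          have : 0 < 4 - 2 * g + g ^ 2 := by nlinarith [sq_nonneg (g - 1)]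
          positivity) (by
          obtain ⟨x, hx⟩ : ∃ x, g = 1 + x := ⟨g - 1, by ring⟩
          subst hx
          have hx0 : 0 ≤ x := by linarith
          have hx1 : x ≤ 1 := by linarith
          nlinarith [mul_nonneg hx0 (sub_nonneg.2 hx1), pow_nonneg hx0 3, pow_nonneg hx0 4, pow_nonneg hx0 2])
      linarith
  subst hg hm
  nlinarith [mul_comm (1 + (s + t)) (0 : ℝ), congrArg (fun z => (1 + (s + t)) * z) h]

lemma case1 (s t c : ℝ) (hs : 0 < s) (hs1 : s ≤ 1) (ht : 0 < t) (ht1 : t ≤ 1)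
    (h : c * (s + t - s * t) = c ^ 2 * (s ^ 2 + s * t + t ^ 2) / 3 + 21 / 256) :
    c * (s * t * (s + t)) ≤ 63 / 32 := by
  obtain ⟨g, hg⟩ : ∃ g, g = s + t := ⟨_, rfl⟩
  obtain ⟨m, hm⟩ : ∃ m, m = s * t := ⟨_, rfl⟩
  have hg0 : 0 < g := by linarith
  have hg2 : g ≤ 2 := by linarith
  have hm0 : 0 ≤ m := by rw [hm]; positivity
  have hm1 : g - 1 ≤ m := by rw [hm, hg]; nlinarith
  have hm2 : m ≤ g ^ 2 / 4 := by rw [hm, hg]; nlinarith [sq_nonneg (s - t)]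
  have key : 0 ≤ (2 * g ^ 3 / 3 * c ^ 2 - 2 * g ^ 2 * c +
      (63 / 32 + 21 * g / 128)) + (g * c - 2 * g / 3 * c ^ 2) * m := by
    have top : 0 ≤ (2 * g ^ 3 / 3 * c ^ 2 - 2 * g ^ 2 * c +
      (63 / 32 + 21 * g / 128)) + (g * c - 2 * g / 3 * c ^ 2) * (g ^ 2 / 4) := by
      have := quad_nonneg (g * (2 * g - g ^ 2 / 4)) (g ^ 3 / 2)
        (63 / 32 + 21 * g / 128) c (by positivity) (by
          have e : g * (2 - g / 4) ^ 2 ≤ 2 * (63 / 32 + 21 * g / 128) := by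
            nlinarith [mul_nonneg hg0.le (sub_nonneg.2 hg2), mul_nonneg (mul_nonneg hg0.le hg0.le) (sub_nonneg.2 hg2)]
          have := mul_le_mul_of_nonneg_left e (by positivity : 0 ≤ g ^ 3)
          nlinarith)
      linarith
    rcases le_total g 1 with hg1 | hg1
    · refine lin_nonneg _ _ 0 (g ^ 2 / 4) m hm0 hm2 ?_ top
      have := quad_nonneg (2 * g ^ 2) (2 * g ^ 3 / 3)
        (63 / 32 + 21 * g / 128) c (by positivity) (by
          have e : 4 * g ≤ 8 / 3 * (63 / 32 + 21 * g / 128) := by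
            nlinarith
          have := mul_le_mul_of_nonneg_left e (by positivity : 0 ≤ g ^ 3)
          nlinarith)
      linarith
    · refine lin_nonneg _ _ (g - 1) (g ^ 2 / 4) m hm1 hm2 ?_ top
      have hB : 0 < g ^ 2 - g + 1 := by nlinarith [sq_nonneg (g - 1)]
      have := quad_nonneg (g * (g + 1)) (2 * g * (g ^ 2 - g + 1) / 3)
        (63 / 32 + 21 * g / 128) c (by positivity) (by
          have e : g * (g + 1) ^ 2 ≤ 8 / 3 * (g ^ 2 - g + 1) * (63 / 32 + 21 * g / 128) := by
            obtain ⟨x, hx⟩ : ∃ x, g = 1 + x := ⟨g - 1, by ring⟩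
            subst hx
            have hx0 : 0 ≤ x := by linarith
            have hx1 : x ≤ 1 := by linarith
            nlinarith [mul_nonneg hx0 (sub_nonneg.2 hx1), pow_nonneg hx0 3, mul_nonneg (mul_nonneg hx0 hx0) (sub_nonneg.2 hx1), pow_nonneg hx0 2]
          have := mul_le_mul_of_nonneg_left e hg0.le
          nlinarith)
      linarith
  subst hg hm
  nlinarith [congrArg (fun z => (s + t) * z) h]

lemma case3 (s t p : ℝ) (hs : 0 ≤ s) (ht : 0 ≤ t) (hst : s + t ≤ 1)
    (h : p * (1 - (s + t)) / 2 = p ^ 2 * (3 + (t - s) ^ 2) / 12 + 21 / 256) :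
    p * (1 + 2 * (s + t) + s ^ 2 + t ^ 2) ≤ 63 / 32 := by
  obtain ⟨g, hg⟩ : ∃ g, g = s + t := ⟨_, rfl⟩
  obtain ⟨m, hm⟩ : ∃ m, m = s * t := ⟨_, rfl⟩
  have hg0 : 0 ≤ g := by linarith
  have hg1 : g ≤ 1 := by linarith
  have hm0 : 0 ≤ m := by rw [hm]; positivity
  have hm2 : m ≤ g ^ 2 / 4 := by rw [hm, hg]; nlinarith [sq_nonneg (s - t)]
  have key : 0 ≤ ((2 + g) * (3 + g ^ 2) / 6 * p ^ 2 - (3 + g) * p +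
      (63 / 32 + 21 * (2 + g) / 128)) + (2 * p - 2 * (2 + g) / 3 * p ^ 2) * m := by
    refine lin_nonneg _ _ 0 (g ^ 2 / 4) m hm0 hm2 ?_ ?_
    · have := quad_nonneg (3 + g) ((2 + g) * (3 + g ^ 2) / 6)
        (63 / 32 + 21 * (2 + g) / 128) p (by positivity) (by
          nlinarith [mul_nonneg hg0 (sub_nonneg.2 hg1), pow_nonneg hg0 3, pow_nonneg hg0 4, pow_nonneg hg0 2])
      linarith
    · have := quad_nonneg (3 + g - g ^ 2 / 2) ((2 + g) / 2)
        (63 / 32 + 21 * (2 + g) / 128) p (by positivity) (by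
          nlinarith [mul_nonneg hg0 (sub_nonneg.2 hg1), pow_nonneg hg0 3, mul_nonneg (pow_nonneg hg0 3) (sub_nonneg.2 hg1), pow_nonneg hg0 2])
      linarith
  subst hg hm
  nlinarith [congrArg (fun z => (2 + s + t) * z) h]

def phi (p q : ℝ) : ℝ := ∫ t in (0:ℝ)..1, max (p + (q - p) * t) 0

lemma phi_symm (p q : ℝ) : phi p q = phi q p := by
  unfold phi
  have := intervalIntegral.integral_comp_sub_left (a := 0) (b := 1) (fun t => max (q + (p - q) * t) 0) 1
  simp only [sub_self, sub_zero] at this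
  rw [← this]
  congr 1; ext t; congr 1; ring

lemma phi_nonpos {p q : ℝ} (hp : p ≤ 0) (hq : q ≤ 0) : phi p q = 0 := by
  unfold phi
  rw [intervalIntegral.integral_congr (g := fun _ => (0:ℝ))]
  · simp
  · intro t ht
    rw [Set.uIcc_of_le zero_le_one] at ht
    apply max_eq_right
    nlinarith [ht.1, ht.2]

lemma phi_pos {p q : ℝ} (hp : 0 ≤ p) (hq : 0 ≤ q) : phi p q = (p + q) / 2 := by
  unfold phi
  rw [intervalIntegral.integral_congr (g := fun t => p + (q - p) * t)]
  · rw [intervalIntegral.integral_add (by simp) (Continuous.intervalIntegrable (by fun_prop) _ _),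
      intervalIntegral.integral_const_mul, integral_id]
    simp; ring
  · intro t ht
    rw [Set.uIcc_of_le zero_le_one] at ht
    apply max_eq_left
    nlinarith [ht.1, ht.2]

lemma phi_mixed {p q : ℝ} (hp : 0 < p) (hq : q ≤ 0) : phi p q = p ^ 2 / (2 * (p - q)) := by
  have hd : 0 < p - q := by linarith
  have hs0 : 0 ≤ p / (p - q) := by positivity
  have hs1 : p / (p - q) ≤ 1 := by rw [div_le_one hd]; linarith
  have hs : p / (p - q) * (p - q) = p := by field_simp
  unfold phi
  rw [← intervalIntegral.integral_add_adjacent_intervals (b := p / (p - q))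
    (Continuous.intervalIntegrable (by fun_prop) _ _) (Continuous.intervalIntegrable (by fun_prop) _ _)]
  rw [intervalIntegral.integral_congr (a := 0) (g := fun t => p + (q - p) * t),
    intervalIntegral.integral_congr (b := 1) (g := fun _ => (0:ℝ))]
  · rw [intervalIntegral.integral_add (by simp) (Continuous.intervalIntegrable (by fun_prop) _ _),
      intervalIntegral.integral_const_mul, integral_id]
    simp
    field_simp; ring
  · intro t ht
    rw [Set.uIcc_of_le hs1] at ht
    apply max_eq_right
    nlinarith [ht.1, ht.2]
  · intro t ht
    rw [Set.uIcc_of_le hs0] at ht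
    apply max_eq_left
    nlinarith [ht.1, ht.2]

def PhiN (p q N : ℝ) : ℝ := phi (p - N) (q - N) + phi (q - N) (q - p - N) +
  phi (q - p - N) (-p - N) + phi (-p - N) (-q - N) + phi (-q - N) (p - q - N) +
  phi (p - q - N) (p - N)

def Nf (p q : ℝ) : ℝ := (p ^ 2 + q ^ 2 - p * q) / 3 + 21 / 256

def Phi (p q : ℝ) : ℝ := PhiN p q (Nf p q)

lemma Nf_pos (p q : ℝ) : 0 < Nf p q := by
  unfold Nf; nlinarith [sq_nonneg (p - q), sq_nonneg p, sq_nonneg q]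

lemma Phi_rot (p q : ℝ) : Phi p q = Phi q (q - p) := by
  have e : Nf q (q - p) = Nf p q := by unfold Nf; ring
  unfold Phi
  rw [e]; unfold PhiN
  have e1 : q - p - q = -p := by ring
  have e2 : -(q - p) = p - q := by ring
  have e3 : q - (q - p) = p := by ring
  rw [e1, e2, e3]; ring

lemma Phi_swap (p q : ℝ) : Phi p q = Phi q p := by
  have e : Nf q p = Nf p q := by unfold Nf; ring
  unfold Phi
  rw [e]; unfold PhiN
  rw [phi_symm (q - _) (p - _), phi_symm (p - _) (p - q - _), phi_symm (p - q - _) (-q - _),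
    phi_symm (-q - _) (-p - _), phi_symm (-p - _) (q - p - _), phi_symm (q - p - _) (q - _)]
  ring

lemma Phi_core (p q : ℝ) (h1 : q ≤ p) (h2 : p ≤ 2 * q) : Phi p q ≤ 63 / 64 := by
  have hN := Nf_pos p q
  have hNe : Nf p q = (p ^ 2 + q ^ 2 - p * q) / 3 + 21 / 256 := rfl
  have hp : 0 ≤ p := by linarith
  have hq : 0 ≤ q := by linarith
  unfold Phi PhiN
  generalize Nf p q = N at *
  rw [phi_nonpos (by linarith : q - p - N ≤ 0) (by linarith : -p - N ≤ 0),
    phi_nonpos (by linarith : -p - N ≤ 0) (by linarith : -q - N ≤ 0)]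
  rcases le_or_gt (p - N) 0 with hP | hP
  · rw [phi_nonpos (by linarith) (by linarith), phi_nonpos (by linarith) (by linarith),
      phi_nonpos (by linarith) (by linarith), phi_nonpos (by linarith) (by linarith)]
    norm_num
  have hp0 : 0 < p := by linarith
  have hq0 : 0 < q := by linarith
  rcases le_or_gt (q - N) 0 with hQ | hQ
  · rw [phi_mixed hP hQ, phi_nonpos hQ (by linarith), phi_nonpos (by linarith) (by linarith),
      phi_symm, phi_mixed hP (by linarith)]
    have hd : 0 < p - q := by linarith
    have hs0 : 0 < (p - N) / (p - q) := by positivity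
    have ht0 : 0 < (p - N) / q := by positivity
    have := case1 ((p - N) / (p - q)) ((p - N) / q) (q * (p - q) / (p - N)) hs0
      (by rw [div_le_one hd]; linarith) ht0 (by rw [div_le_one hq0]; linarith)
      (by
        field_simp
        subst hNe
        ring)
    have e : q * (p - q) / (p - N) * ((p - N) / (p - q) * ((p - N) / q) * ((p - N) / (p - q) + (p - N) / q))
      = 2 * ((p - N) ^ 2 / (2 * (p - q)) + (p - N) ^ 2 / (2 * q)) := by
      field_simp
    rw [e] at this
    have e1 : p - N - (q - N) = p - q := by ring
    have e2 : p - N - (p - q - N) = q := by ring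
    rw [e1, e2]
    linarith
  rcases le_or_gt (p - q - N) 0 with hR | hR
  · rw [phi_pos hP.le hQ.le, phi_mixed hQ (by linarith), phi_nonpos (by linarith) hR,
      phi_symm (p - q - N), phi_mixed hP hR]
    have hs0 : 0 < (p - N) / q := by positivity
    have ht0 : 0 < (q - N) / p := by positivity
    have hd : 0 < p + q - N := by linarith
    have := case2 ((p - N) / q) ((q - N) / p) (p * q / (p + q - N)) hs0.le
      (by rw [div_le_one hq0]; linarith) ht0.le (by rw [div_le_one hp0]; linarith)
      (by
        field_simp
        subst hNe
        ring)
    have e : p * q / (p + q - N) * ((1 + (p - N) / q) * (1 + (q - N) / p) * ((p - N) / q + (q - N) / p))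
      = 2 * ((p - N + (q - N)) / 2 + (q - N) ^ 2 / (2 * p) + (p - N) ^ 2 / (2 * q)) := by
      field_simp
      ring
    rw [e] at this
    have e1 : q - N - (q - p - N) = p := by ring
    have e2 : p - N - (p - q - N) = q := by ring
    rw [e1, e2]
    linarith
  · rw [phi_pos hP.le hQ.le, phi_mixed hQ (by linarith), phi_pos hR.le hP.le,
      phi_symm (-q - N), phi_mixed hR (by linarith)]
    have hs0 : 0 < (p - q - N) / p := by positivity
    have ht0 : 0 < (q - N) / p := by positivity
    have := case3 ((p - q - N) / p) ((q - N) / p) p hs0.le ht0.le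
      (by rw [← add_div, div_le_one hp0]; linarith)
      (by
        field_simp
        subst hNe
        ring)
    have e : p * (1 + 2 * ((p - q - N) / p + (q - N) / p) + ((p - q - N) / p) ^ 2 + ((q - N) / p) ^ 2)
      = 2 * ((p - N + (q - N)) / 2 + (q - N) ^ 2 / (2 * p) + (p - q - N) ^ 2 / (2 * p) + (p - q - N + (p - N)) / 2) := by
      field_simp
      ring
    rw [e] at this
    have e1 : q - N - (q - p - N) = p := by ring
    have e2 : p - q - N - (-q - N) = p := by ring
    rw [e1, e2]
    linarith

lemma Phi_B (p q : ℝ) (h0 : 0 ≤ q) (h1 : q ≤ p) : Phi p q ≤ 63 / 64 := by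
  rcases le_total p (2 * q) with h | h
  · exact Phi_core p q h1 h
  · have : Phi p q = Phi p (p - q) := by
      rw [Phi_swap p q, Phi_rot q p]
    rw [this]
    exact Phi_core _ _ (by linarith) (by linarith)

lemma Phi_C (p q : ℝ) (h0 : 0 ≤ q) (h1 : 0 ≤ p) : Phi p q ≤ 63 / 64 := by
  rcases le_total q p with h | h
  · exact Phi_B p q h0 h
  · rw [Phi_swap]; exact Phi_B q p h1 h

lemma Phi_le (p q : ℝ) : Phi p q ≤ 63 / 64 := by
  have h3 : Phi p q = Phi (-p) (-q) := by
    rw [Phi_rot p q, Phi_rot q, Phi_rot (q - p)]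
    congr 1 <;> ring
  rcases le_total 0 p with hp | hp <;> rcases le_total 0 q with hq | hq
  · exact Phi_C _ _ hq hp
  · rw [h3, Phi_rot]; exact Phi_C _ _ (by linarith) (by linarith)
  · rw [Phi_rot]; exact Phi_C _ _ (by linarith) (by linarith)
  · rw [h3]; exact Phi_C _ _ (by linarith) (by linarith)

/-- Horizontal coordinate and (scaled) vertical coordinate parametrization. -/
def gam (a b c d t : ℝ) : E2 := pt (a + b * t) (√3 * (c + d * t))

lemma gam_isometry (a b c d : ℝ) (h : b ^ 2 + 3 * d ^ 2 = 1) : Isometry (gam a b c d) := by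
  apply Isometry.of_dist_eq
  intro x y
  rw [EuclideanSpace.dist_eq, Real.dist_eq, ← Real.sqrt_sq_eq_abs]
  congr 1
  simp only [gam, pt, Fin.sum_univ_two, Real.dist_eq, sq_abs]
  simp
  have h3 : √3 ^ 2 = 3 := Real.sq_sqrt (by norm_num)
  linear_combination (x - y) ^ 2 * h + d ^ 2 * (x - y) ^ 2 * h3

lemma gam_eq {a b c d t a' b' c' d' t' : ℝ} (h : gam a b c d t = gam a' b' c' d' t') :
    a + b * t = a' + b' * t' ∧ c + d * t = c' + d' * t' := by
  unfold gam pt at h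
  have h0 := congrArg (fun v : E2 => v 0) h
  have h1 := congrArg (fun v : E2 => v 1) h
  simp at h0 h1
  refine ⟨h0, ?_⟩
  exact h1

lemma gam_seg (a b c d : ℝ) : gam a b c d '' Set.Icc 0 1 = segment ℝ (gam a b c d 0) (gam a b c d 1) := by
  rw [segment_eq_image']
  apply Set.image_congr
  intro t _
  unfold gam pt
  ext i
  fin_cases i <;> simp <;> ring

lemma gam_restrict (a b c d : ℝ) (h : b ^ 2 + 3 * d ^ 2 = 1) :
    (μH[1] : Measure E2).restrict (gam a b c d '' Set.Ico 0 1) =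
      (volume.restrict (Set.Ico (0:ℝ) 1)).map (gam a b c d) := by
  have hi := gam_isometry a b c d h
  have hm := hi.continuous.measurable
  have hme : MeasurableEmbedding (gam a b c d) := hi.isClosedEmbedding.measurableEmbedding
  ext s hs
  rw [Measure.map_apply hm hs, Measure.restrict_apply hs, Measure.restrict_apply (hm hs),
    ← hausdorffMeasure_real, ← hi.hausdorffMeasure_image (Or.inl zero_le_one)]
  congr 1
  ext x
  constructor
  · rintro ⟨h1, t, ht, rfl⟩; exact ⟨t, ⟨h1, ht⟩, rfl⟩
  · rintro ⟨t, ⟨h1, ht⟩, rfl⟩; exact ⟨h1, t, ht, rfl⟩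

def g0 := gam 0 1 0 0
def g1 := gam 1 (1/2) 0 (1/2)
def g2 := gam (3/2) (-(1/2)) (1/2) (1/2)
def g3 := gam 1 (-1) 1 0
def g4 := gam 0 (-(1/2)) 1 (-(1/2))
def g5 := gam (-(1/2)) (1/2) (1/2) (-(1/2))

lemma Icc_split (g : ℝ → E2) : g '' Set.Icc 0 1 = g '' Set.Ico 0 1 ∪ {g 1} := by
  rw [← Set.Ico_union_right zero_le_one, Set.image_union, Set.image_singleton]

lemma zero_mem (g : ℝ → E2) : g 0 ∈ g '' Set.Ico 0 1 := ⟨0, by simp, rfl⟩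

lemma hexL_eq : hexL = g0 '' Set.Ico 0 1 ∪ g1 '' Set.Ico 0 1 ∪ g2 '' Set.Ico 0 1 ∪
    g3 '' Set.Ico 0 1 ∪ g4 '' Set.Ico 0 1 ∪ g5 '' Set.Ico 0 1 := by
  have e0 : g0 1 = g1 0 := by simp [g0, g1, gam]
  have e1 : g1 1 = g2 0 := by simp [g1, g2, gam]; norm_num
  have e2 : g2 1 = g3 0 := by simp [g2, g3, gam]; norm_num
  have e3 : g3 1 = g4 0 := by simp [g3, g4, gam]
  have e4 : g4 1 = g5 0 := by simp [g4, g5, gam]; norm_num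
  have e5 : g5 1 = g0 0 := by simp [g5, g0, gam]
  have v0 : pt 0 0 = g0 0 := by simp [g0, gam]
  have v1 : pt 1 0 = g1 0 := by simp [g1, gam]
  have v2 : pt (3/2) (√3/2) = g2 0 := by simp [g2, gam]; rfl
  have v3 : pt 1 (√3) = g3 0 := by simp [g3, gam]
  have v4 : pt 0 (√3) = g4 0 := by simp [g4, gam]
  have v5 : pt (-(1/2)) (√3/2) = g5 0 := by simp [g5, gam]; rfl
  have s0 : segment ℝ (g0 0) (g1 0) = g0 '' Set.Icc 0 1 := by rw [← e0]; exact (gam_seg _ _ _ _).symm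
  have s1 : segment ℝ (g1 0) (g2 0) = g1 '' Set.Icc 0 1 := by rw [← e1]; exact (gam_seg _ _ _ _).symm
  have s2 : segment ℝ (g2 0) (g3 0) = g2 '' Set.Icc 0 1 := by rw [← e2]; exact (gam_seg _ _ _ _).symm
  have s3 : segment ℝ (g3 0) (g4 0) = g3 '' Set.Icc 0 1 := by rw [← e3]; exact (gam_seg _ _ _ _).symm
  have s4 : segment ℝ (g4 0) (g5 0) = g4 '' Set.Icc 0 1 := by rw [← e4]; exact (gam_seg _ _ _ _).symm
  have s5 : segment ℝ (g5 0) (g0 0) = g5 '' Set.Icc 0 1 := by rw [← e5]; exact (gam_seg _ _ _ _).symm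
  unfold hexL
  rw [v0, v1, v2, v3, v4, v5, s0, s1, s2, s3, s4, s5]
  simp only [Icc_split, e0, e1, e2, e3, e4, e5]
  have m0 := zero_mem g0
  have m1 := zero_mem g1
  have m2 := zero_mem g2
  have m3 := zero_mem g3
  have m4 := zero_mem g4
  have m5 := zero_mem g5
  ext x
  simp only [Set.mem_union, Set.mem_singleton_iff]
  constructor
  · rintro ((((((h | rfl) | (h | rfl)) | (h | rfl)) | (h | rfl)) | (h | rfl)) | (h | rfl)) <;> tauto
  · tauto

lemma gam_disj (a b c d a' b' c' d' : ℝ)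
    (h : ∀ t t', 0 ≤ t → t < 1 → 0 ≤ t' → t' < 1 → a + b * t = a' + b' * t' →
      c + d * t = c' + d' * t' → False) :
    Disjoint (gam a b c d '' Set.Ico 0 1) (gam a' b' c' d' '' Set.Ico 0 1) := by
  rw [Set.disjoint_left]
  rintro x ⟨t, ht, rfl⟩ ⟨t', ht', he⟩
  obtain ⟨h1, h2⟩ := gam_eq he.symm
  exact h t t' ht.1 ht.2 ht'.1 ht'.2 h1 h2

lemma gam_meas (a b c d : ℝ) (h : b ^ 2 + 3 * d ^ 2 = 1) :
    MeasurableSet (gam a b c d '' Set.Ico 0 1) :=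
  (gam_isometry a b c d h).isClosedEmbedding.measurableEmbedding.measurableSet_image.2 measurableSet_Ico

def seg (g : ℝ → E2) : Measure E2 := (volume.restrict (Set.Ico (0:ℝ) 1)).map g

lemma hex_restrict : (μH[1] : Measure E2).restrict hexL =
    seg g0 + seg g1 + seg g2 + seg g3 + seg g4 + seg g5 := by
  rw [hexL_eq, Measure.restrict_union, Measure.restrict_union, Measure.restrict_union,
    Measure.restrict_union, Measure.restrict_union]
  · unfold seg g0 g1 g2 g3 g4 g5
    rw [gam_restrict _ _ _ _ (by norm_num), gam_restrict _ _ _ _ (by norm_num),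
      gam_restrict _ _ _ _ (by norm_num), gam_restrict _ _ _ _ (by norm_num),
      gam_restrict _ _ _ _ (by norm_num), gam_restrict _ _ _ _ (by norm_num)]
  all_goals first
    | exact gam_meas _ _ _ _ (by norm_num)
    | skip
  all_goals
    try simp only [Set.disjoint_union_left]
    repeat' apply And.intro
    all_goals
      apply gam_disj
      intros
      linarith

lemma seg_integrable {f : E2 → ℝ} (hf : Continuous f) (a b c d : ℝ) (h : b ^ 2 + 3 * d ^ 2 = 1) :
    Integrable f (seg (gam a b c d)) := by
  have hi := gam_isometry a b c d h
  unfold seg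
  rw [integrable_map_measure hf.aestronglyMeasurable hi.continuous.measurable.aemeasurable]
  exact (((hf.comp hi.continuous).continuousOn).integrableOn_Icc (a := 0) (b := 1)).mono_set
    Set.Ico_subset_Icc_self

lemma seg_integral {f : E2 → ℝ} (hf : Continuous f) (a b c d : ℝ) (h : b ^ 2 + 3 * d ^ 2 = 1) :
    ∫ x, f x ∂(seg (gam a b c d)) = ∫ t in (0:ℝ)..1, f (gam a b c d t) := by
  have hi := gam_isometry a b c d h
  unfold seg
  rw [integral_map hi.continuous.measurable.aemeasurable hf.aestronglyMeasurable,
    intervalIntegral.integral_of_le zero_le_one, integral_Ico_eq_integral_Ioc]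

lemma hex_integral {f : E2 → ℝ} (hf : Continuous f) :
    ∫ x, f x ∂hexP = 1 / 6 * ((∫ t in (0:ℝ)..1, f (g0 t)) + (∫ t in (0:ℝ)..1, f (g1 t)) +
      (∫ t in (0:ℝ)..1, f (g2 t)) + (∫ t in (0:ℝ)..1, f (g3 t)) +
      (∫ t in (0:ℝ)..1, f (g4 t)) + (∫ t in (0:ℝ)..1, f (g5 t))) := by
  have i0 : Integrable f (seg g0) := seg_integrable hf _ _ _ _ (by norm_num)
  have i1 : Integrable f (seg g1) := seg_integrable hf _ _ _ _ (by norm_num)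
  have i2 : Integrable f (seg g2) := seg_integrable hf _ _ _ _ (by norm_num)
  have i3 : Integrable f (seg g3) := seg_integrable hf _ _ _ _ (by norm_num)
  have i4 : Integrable f (seg g4) := seg_integrable hf _ _ _ _ (by norm_num)
  have i5 : Integrable f (seg g5) := seg_integrable hf _ _ _ _ (by norm_num)
  have j0 : ∫ x, f x ∂(seg g0) = _ := seg_integral hf _ _ _ _ (by norm_num)
  have j1 : ∫ x, f x ∂(seg g1) = _ := seg_integral hf _ _ _ _ (by norm_num)
  have j2 : ∫ x, f x ∂(seg g2) = _ := seg_integral hf _ _ _ _ (by norm_num)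
  have j3 : ∫ x, f x ∂(seg g3) = _ := seg_integral hf _ _ _ _ (by norm_num)
  have j4 : ∫ x, f x ∂(seg g4) = _ := seg_integral hf _ _ _ _ (by norm_num)
  have j5 : ∫ x, f x ∂(seg g5) = _ := seg_integral hf _ _ _ _ (by norm_num)
  unfold hexP
  rw [integral_smul_measure, hex_restrict,
    integral_add_measure ((((i0.add_measure i1).add_measure i2).add_measure i3).add_measure i4) i5,
    integral_add_measure (((i0.add_measure i1).add_measure i2).add_measure i3) i4,
    integral_add_measure ((i0.add_measure i1).add_measure i2) i3,
    integral_add_measure (i0.add_measure i1) i2,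
    integral_add_measure i0 i1, j0, j1, j2, j3, j4, j5]
  simp [g0, g1, g2, g3, g4, g5]

def dmin (a b c x : E2) : ℝ := min (‖x - a‖ ^ 2) (min (‖x - b‖ ^ 2) (‖x - c‖ ^ 2))

lemma dmin_cont (a b c : E2) : Continuous (dmin a b c) := by
  unfold dmin; fun_prop

lemma sInf_three (a b c x : E2) :
    sInf ((fun a => ‖x - a‖ ^ 2) '' ({a, b, c} : Set E2)) = dmin a b c x := by
  unfold dmin
  rw [Set.image_insert_eq, Set.image_pair, csInf_insert (Set.Finite.bddBelow (by simp)) (by simp),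
    csInf_pair]

lemma norm_gam (a b c d t : ℝ) (v : E2) :
    ‖gam a b c d t - v‖ ^ 2 = (a + b * t - v 0) ^ 2 + (√3 * (c + d * t) - v 1) ^ 2 := by
  rw [EuclideanSpace.real_norm_sq_eq]
  simp [gam, pt, Fin.sum_univ_two]

/-- The two hexagonal coordinates of a point. -/
def pc (v : E2) : ℝ := -((v 0 - 1 / 2) + √3 * (v 1 - √3 / 2))
def qc (v : E2) : ℝ := (v 0 - 1 / 2) - √3 * (v 1 - √3 / 2)

lemma N_eq (v : E2) : Nf (pc v) (qc v) = (v 0 - 1 / 2) ^ 2 + (v 1 - √3 / 2) ^ 2 + 21 / 256 := by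
  have h3 : √3 ^ 2 = 3 := Real.sq_sqrt (by norm_num)
  unfold Nf pc qc
  linear_combination (v 1 - √3 / 2) ^ 2 / 3 * h3

lemma edge (g : ℝ → E2) (hg : Continuous g) (h h' : E2 → ℝ)
    (H : ∀ v t, ‖g t - v‖ ^ 2 = 3 / 4 + (t - 1 / 2) ^ 2 - 21 / 256 - (h v + (h' v - h v) * t))
    (a b c : E2) :
    5 / 6 - 21 / 256 - (phi (h a) (h' a) + phi (h b) (h' b) + phi (h c) (h' c)) ≤
      ∫ t in (0:ℝ)..1, dmin a b c (g t) := by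
  have e : (∫ t in (0:ℝ)..1, (3 / 4 + (t - 1 / 2) ^ 2 - 21 / 256 -
      (max (h a + (h' a - h a) * t) 0 + max (h b + (h' b - h b) * t) 0 +
        max (h c + (h' c - h c) * t) 0))) =
      5 / 6 - 21 / 256 - (phi (h a) (h' a) + phi (h b) (h' b) + phi (h c) (h' c)) := by
    unfold phi
    rw [intervalIntegral.integral_sub (Continuous.intervalIntegrable (by fun_prop) _ _)
      (Continuous.intervalIntegrable (by fun_prop) _ _),
      intervalIntegral.integral_add (Continuous.intervalIntegrable (by fun_prop) _ _)
      (Continuous.intervalIntegrable (by fun_prop) _ _),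
      intervalIntegral.integral_add (Continuous.intervalIntegrable (by fun_prop) _ _)
      (Continuous.intervalIntegrable (by fun_prop) _ _)]
    congr 1
    rw [intervalIntegral.integral_sub (Continuous.intervalIntegrable (by fun_prop) _ _)
      (Continuous.intervalIntegrable (by fun_prop) _ _),
      intervalIntegral.integral_add (Continuous.intervalIntegrable (by fun_prop) _ _)
      (Continuous.intervalIntegrable (by fun_prop) _ _),
      intervalIntegral.integral_comp_sub_right (fun t => t ^ 2), integral_pow]
    simp
    norm_num
  rw [← e]
  apply intervalIntegral.integral_mono_on zero_le_one
    (Continuous.intervalIntegrable (by fun_prop) _ _)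
    (((dmin_cont a b c).comp hg).intervalIntegrable _ _)
  intro t _
  unfold dmin
  have ha := H a t
  have hb := H b t
  have hc := H c t
  have a1 := le_max_left (h a + (h' a - h a) * t) 0
  have a2 := le_max_right (h a + (h' a - h a) * t) 0
  have b1 := le_max_left (h b + (h' b - h b) * t) 0
  have b2 := le_max_right (h b + (h' b - h b) * t) 0
  have c1 := le_max_left (h c + (h' c - h c) * t) 0
  have c2 := le_max_right (h c + (h' c - h c) * t) 0
  refine le_min ?_ (le_min ?_ ?_) <;> linarith

lemma gam_cont (a b c d : ℝ) (h : b ^ 2 + 3 * d ^ 2 = 1) : Continuous (gam a b c d) :=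
  (gam_isometry a b c d h).continuous

lemma lower (a b c : E2) : 199 / 768 ≤ ∫ x, dmin a b c x ∂hexP := by
  rw [hex_integral (dmin_cont a b c)]
  have h3 : √3 ^ 2 = 3 := Real.sq_sqrt (by norm_num)
  have E0 := edge g0 (gam_cont _ _ _ _ (by norm_num)) (fun v => pc v - Nf (pc v) (qc v))
    (fun v => qc v - Nf (pc v) (qc v)) (by
      intro v t
      simp only [N_eq]
      unfold g0 pc qc
      rw [norm_gam]
      ring_nf; simp only [h3]; ring) a b c
  have E1 := edge g1 (gam_cont _ _ _ _ (by norm_num)) (fun v => qc v - Nf (pc v) (qc v))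
    (fun v => qc v - pc v - Nf (pc v) (qc v)) (by
      intro v t
      simp only [N_eq]
      unfold g1 pc qc
      rw [norm_gam]
      ring_nf; simp only [h3]; ring) a b c
  have E2 := edge g2 (gam_cont _ _ _ _ (by norm_num)) (fun v => qc v - pc v - Nf (pc v) (qc v))
    (fun v => - pc v - Nf (pc v) (qc v)) (by
      intro v t
      simp only [N_eq]
      unfold g2 pc qc
      rw [norm_gam]
      ring_nf; simp only [h3]; ring) a b c
  have E3 := edge g3 (gam_cont _ _ _ _ (by norm_num)) (fun v => - pc v - Nf (pc v) (qc v))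
    (fun v => - qc v - Nf (pc v) (qc v)) (by
      intro v t
      simp only [N_eq]
      unfold g3 pc qc
      rw [norm_gam]
      ring_nf; simp only [h3]; ring) a b c
  have E4 := edge g4 (gam_cont _ _ _ _ (by norm_num)) (fun v => - qc v - Nf (pc v) (qc v))
    (fun v => pc v - qc v - Nf (pc v) (qc v)) (by
      intro v t
      simp only [N_eq]
      unfold g4 pc qc
      rw [norm_gam]
      ring_nf; simp only [h3]; ring) a b c
  have E5 := edge g5 (gam_cont _ _ _ _ (by norm_num)) (fun v => pc v - qc v - Nf (pc v) (qc v))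
    (fun v => pc v - Nf (pc v) (qc v)) (by
      intro v t
      simp only [N_eq]
      unfold g5 pc qc
      rw [norm_gam]
      ring_nf; simp only [h3]; ring) a b c
  have Pa := Phi_le (pc a) (qc a)
  have Pb := Phi_le (pc b) (qc b)
  have Pc := Phi_le (pc c) (qc c)
  unfold Phi PhiN at Pa Pb Pc
  linarith

lemma up (f : ℝ → ℝ) (hf : Continuous f) (l A B C r : ℝ) (hlr : l ≤ r)
    (h : ∀ t, f t ≤ A + B * t + C * t ^ 2) :
    ∫ t in l..r, f t ≤ A * (r - l) + B * ((r ^ 2 - l ^ 2) / 2) + C * ((r ^ 3 - l ^ 3) / 3) := by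
  have e : ∫ t in l..r, (A + B * t + C * t ^ 2) =
      A * (r - l) + B * ((r ^ 2 - l ^ 2) / 2) + C * ((r ^ 3 - l ^ 3) / 3) := by
    rw [intervalIntegral.integral_add (Continuous.intervalIntegrable (by fun_prop) _ _)
      (Continuous.intervalIntegrable (by fun_prop) _ _),
      intervalIntegral.integral_add (Continuous.intervalIntegrable (by fun_prop) _ _)
      (Continuous.intervalIntegrable (by fun_prop) _ _),
      intervalIntegral.integral_const_mul, intervalIntegral.integral_const_mul, integral_id, integral_pow]
    simp
    norm_num
    ring
  rw [← e]
  exact intervalIntegral.integral_mono_on hlr (hf.intervalIntegrable _ _)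
    (Continuous.intervalIntegrable (by fun_prop) _ _) (fun t _ => h t)

lemma up2 (f : ℝ → ℝ) (hf : Continuous f) (A B C A' B' C' : ℝ)
    (h : ∀ t, f t ≤ A + B * t + C * t ^ 2) (h' : ∀ t, f t ≤ A' + B' * t + C' * t ^ 2) :
    ∫ t in (0:ℝ)..1, f t ≤ A * (1 / 2) + B * (1 / 8) + C * (1 / 24) +
      (A' * (1 / 2) + B' * (3 / 8) + C' * (7 / 24)) := by
  rw [← intervalIntegral.integral_add_adjacent_intervals (b := 1 / 2)
    (hf.intervalIntegrable _ _) (hf.intervalIntegrable _ _)]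
  have e1 := up f hf 0 A B C (1 / 2) (by norm_num) h
  have e2 := up f hf (1 / 2) A' B' C' 1 (by norm_num) h'
  linarith

def o1 : E2 := pt (37/32) (9 * √3 / 32)
def o2 : E2 := pt (1/2) (15 * √3 / 16)
def o3 : E2 := pt (-(5/32)) (9 * √3 / 32)

lemma o1_le (x : E2) : dmin o1 o2 o3 x ≤ ‖x - o1‖ ^ 2 := min_le_left _ _
lemma o2_le (x : E2) : dmin o1 o2 o3 x ≤ ‖x - o2‖ ^ 2 := (min_le_right _ _).trans (min_le_left _ _)
lemma o3_le (x : E2) : dmin o1 o2 o3 x ≤ ‖x - o3‖ ^ 2 := (min_le_right _ _).trans (min_le_right _ _)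

lemma norm_gam_pt (a b c d t x y : ℝ) :
    ‖gam a b c d t - pt x (y * √3)‖ ^ 2 = ((a - x) ^ 2 + 3 * (c - y) ^ 2) +
      2 * (b * (a - x) + 3 * d * (c - y)) * t + (b ^ 2 + 3 * d ^ 2) * t ^ 2 := by
  have h3 : √3 ^ 2 = 3 := Real.sq_sqrt (by norm_num)
  rw [norm_gam]
  simp [pt]
  linear_combination (c + d * t - y) ^ 2 * h3

lemma upper : ∫ x, dmin o1 o2 o3 x ∂hexP ≤ 199 / 768 := by
  rw [hex_integral (dmin_cont _ _ _)]
  have q1 : o1 = pt (37/32) (9 / 32 * √3) := by unfold o1; congr 1; ring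
  have q2 : o2 = pt (1/2) (15 / 16 * √3) := by unfold o2; congr 1; ring
  have q3 : o3 = pt (-(5/32)) (9 / 32 * √3) := by unfold o3; congr 1; ring
  have c0 : Continuous g0 := gam_cont _ _ _ _ (by norm_num)
  have c1 : Continuous g1 := gam_cont _ _ _ _ (by norm_num)
  have c2 : Continuous g2 := gam_cont _ _ _ _ (by norm_num)
  have c3 : Continuous g3 := gam_cont _ _ _ _ (by norm_num)
  have c4 : Continuous g4 := gam_cont _ _ _ _ (by norm_num)
  have c5 : Continuous g5 := gam_cont _ _ _ _ (by norm_num)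
  have u0 := up2 _ ((dmin_cont o1 o2 o3).comp c0) _ _ _ _ _ _
    (fun t => (o3_le (g0 t)).trans (by rw [q3]; exact (norm_gam_pt _ _ _ _ _ _ _).le))
    (fun t => (o1_le (g0 t)).trans (by rw [q1]; exact (norm_gam_pt _ _ _ _ _ _ _).le))
  have u1 := up2 _ ((dmin_cont o1 o2 o3).comp c1) _ _ _ _ _ _
    (fun t => (o1_le (g1 t)).trans (by rw [q1]; exact (norm_gam_pt _ _ _ _ _ _ _).le))
    (fun t => (o1_le (g1 t)).trans (by rw [q1]; exact (norm_gam_pt _ _ _ _ _ _ _).le))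
  have u2 := up2 _ ((dmin_cont o1 o2 o3).comp c2) _ _ _ _ _ _
    (fun t => (o1_le (g2 t)).trans (by rw [q1]; exact (norm_gam_pt _ _ _ _ _ _ _).le))
    (fun t => (o2_le (g2 t)).trans (by rw [q2]; exact (norm_gam_pt _ _ _ _ _ _ _).le))
  have u3 := up2 _ ((dmin_cont o1 o2 o3).comp c3) _ _ _ _ _ _
    (fun t => (o2_le (g3 t)).trans (by rw [q2]; exact (norm_gam_pt _ _ _ _ _ _ _).le))
    (fun t => (o2_le (g3 t)).trans (by rw [q2]; exact (norm_gam_pt _ _ _ _ _ _ _).le))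
  have u4 := up2 _ ((dmin_cont o1 o2 o3).comp c4) _ _ _ _ _ _
    (fun t => (o2_le (g4 t)).trans (by rw [q2]; exact (norm_gam_pt _ _ _ _ _ _ _).le))
    (fun t => (o3_le (g4 t)).trans (by rw [q3]; exact (norm_gam_pt _ _ _ _ _ _ _).le))
  have u5 := up2 _ ((dmin_cont o1 o2 o3).comp c5) _ _ _ _ _ _
    (fun t => (o3_le (g5 t)).trans (by rw [q3]; exact (norm_gam_pt _ _ _ _ _ _ _).le))
    (fun t => (o3_le (g5 t)).trans (by rw [q3]; exact (norm_gam_pt _ _ _ _ _ _ _).le))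
  simp only [Function.comp_apply] at u0 u1 u2 u3 u4 u5
  norm_num at u0 u1 u2 u3 u4 u5 ⊢
  linarith

lemma lower_set (α : Set E2) (hf : α.Finite) (hn : α.Nonempty) (hc : α.ncard ≤ 3) :
    199 / 768 ≤ ∫ x, sInf ((fun a => ‖x - a‖ ^ 2) '' α) ∂hexP := by
  obtain ⟨a, b, c, rfl⟩ : ∃ a b c, α = {a, b, c} := by
    have : 0 < α.ncard := (Set.ncard_pos hf).2 hn
    have h : α.ncard = 1 ∨ α.ncard = 2 ∨ α.ncard = 3 := by omega
    rcases h with h | h | h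
    · obtain ⟨a, rfl⟩ := Set.ncard_eq_one.1 h
      exact ⟨a, a, a, by simp⟩
    · obtain ⟨a, b, _, rfl⟩ := Set.ncard_eq_two.1 h
      exact ⟨a, b, b, by simp⟩
    · obtain ⟨a, b, c, _, _, _, rfl⟩ := Set.ncard_eq_three.1 h
      exact ⟨a, b, c, rfl⟩
  simp only [sInf_three]
  exact lower a b c

/-- The set `{(37/32, 9√3/32), (1/2, 15√3/16), (-5/32, 9√3/32)}` forms an
optimal set of three-means for the uniform distribution on the hexagon
boundary, and `V₃ = 199/768`. -/
theorem stmt_3 :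
    IsOptimalSet hexP 3
      {pt (37/32) (9 * Real.sqrt 3 / 32), pt (1/2) (15 * Real.sqrt 3 / 16),
        pt (-(5/32)) (9 * Real.sqrt 3 / 32)} ∧
    quantErr hexP 3 = 199 / 768 := by
  have hv : ∫ x, sInf ((fun a => ‖x - a‖ ^ 2) '' ({o1, o2, o3} : Set E2)) ∂hexP = 199 / 768 := by
    simp only [sInf_three]
    exact le_antisymm upper (lower _ _ _)
  have hfin : ({o1, o2, o3} : Set E2).Finite := by simp
  have hcard : ({o1, o2, o3} : Set E2).ncard ≤ 3 := by
    have h1 := Set.ncard_insert_le o1 ({o2, o3} : Set E2)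
    have h2 := Set.ncard_insert_le o2 ({o3} : Set E2)
    have h3 := Set.ncard_singleton o3
    omega
  have hq : quantErr hexP 3 = 199 / 768 := by
    unfold quantErr
    apply IsLeast.csInf_eq
    refine ⟨⟨_, hfin, by simp, hcard, hv.symm⟩, ?_⟩
    rintro v ⟨α, h1, h2, h3, rfl⟩
    exact lower_set α h1 h2 h3
  exact ⟨⟨hfin, by simp, hcard, hv.trans hq.symm⟩, hq⟩
end
end

section
/- Let P be the uniform probability distribution on the boundary L of the regular hexagon with vertices (0,0), (1,0), (3/2,√3/2), (1,√3), (0,√3), (−1/2,√3/2), and let Vₙ(P) denote the nth quantization error. Then the quantization dimension of P exists and equals 1; that is, lim_{n→∞} (2 log n)/(−log Vₙ(P)) = 1. -/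
open MeasureTheory Real Filter
open scoped ENNReal

noncomputable section

lemma dist_pt_le (a b c d : ℝ) (h : (a-c)^2+(b-d)^2 ≤ 1) : dist (pt a b) (pt c d) ≤ 1 := by
  rw [EuclideanSpace.dist_eq]
  simp only [Fin.sum_univ_two, pt, Real.dist_eq, sq_abs]
  refine Real.sqrt_le_iff.2 ⟨zero_le_one, ?_⟩
  simpa using h

lemma seg_cover (p q : E2) (m : ℕ) (hm : 1 ≤ m) (h : dist p q ≤ 1) :
    ∃ α : Finset E2, α.card ≤ m + 1 ∧ ∀ x ∈ segment ℝ p q, ∃ a ∈ α, dist x a ≤ 1 / m := by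
  classical
  have hm0 : (0:ℝ) < m := by exact_mod_cast hm
  refine ⟨(Finset.range (m+1)).image (fun k : ℕ => AffineMap.lineMap p q ((k:ℝ)/m)), ?_, ?_⟩
  · exact Finset.card_image_le.trans (by simp)
  · intro x hx
    rw [segment_eq_image_lineMap] at hx
    obtain ⟨t, ⟨h0, h1⟩, rfl⟩ := hx
    have htm : 0 ≤ t * m := by positivity
    refine ⟨_, Finset.mem_image_of_mem _ (a := ⌊t * m⌋₊) ?_, ?_⟩
    · rw [Finset.mem_range, Nat.lt_succ_iff]
      apply Nat.floor_le_of_le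
      nlinarith
    · rw [dist_lineMap_lineMap]
      have h2 := Nat.floor_le htm
      have h3 := Nat.lt_floor_add_one (t * m)
      have : dist t ((⌊t * m⌋₊ : ℝ)/m) ≤ 1/m := by
        rw [Real.dist_eq, show t - (⌊t * m⌋₊ : ℝ)/m = (t*m - ⌊t * m⌋₊)/m by field_simp,
          abs_div, abs_of_pos hm0, abs_of_nonneg (by linarith)]
        gcongr
        linarith
      calc _ ≤ 1/(m:ℝ) * 1 := by gcongr
        _ = _ := by ring

lemma hex_cover (m : ℕ) (hm : 1 ≤ m) :
    ∃ α : Finset E2, α.card ≤ 6 * (m + 1) ∧ ∀ x ∈ hexL, ∃ a ∈ α, dist x a ≤ 1 / m := by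
  classical
  have h3 : Real.sqrt 3 ^ 2 = 3 := Real.sq_sqrt (by norm_num)
  obtain ⟨a1, c1, h1⟩ := seg_cover (pt 0 0) (pt 1 0) m hm (dist_pt_le _ _ _ _ (by nlinarith))
  obtain ⟨a2, c2, h2⟩ := seg_cover (pt 1 0) (pt (3/2) (Real.sqrt 3/2)) m hm (dist_pt_le _ _ _ _ (by nlinarith))
  obtain ⟨a3, c3, h3⟩ := seg_cover (pt (3/2) (Real.sqrt 3/2)) (pt 1 (Real.sqrt 3)) m hm (dist_pt_le _ _ _ _ (by nlinarith))
  obtain ⟨a4, c4, h4⟩ := seg_cover (pt 1 (Real.sqrt 3)) (pt 0 (Real.sqrt 3)) m hm (dist_pt_le _ _ _ _ (by nlinarith))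
  obtain ⟨a5, c5, h5⟩ := seg_cover (pt 0 (Real.sqrt 3)) (pt (-(1/2)) (Real.sqrt 3/2)) m hm (dist_pt_le _ _ _ _ (by nlinarith))
  obtain ⟨a6, c6, h6⟩ := seg_cover (pt (-(1/2)) (Real.sqrt 3/2)) (pt 0 0) m hm (dist_pt_le _ _ _ _ (by nlinarith))
  refine ⟨a1 ∪ a2 ∪ a3 ∪ a4 ∪ a5 ∪ a6, ?_, ?_⟩
  · have e1 := Finset.card_union_le a1 a2
    have e2 := Finset.card_union_le (a1 ∪ a2) a3
    have e3 := Finset.card_union_le (a1 ∪ a2 ∪ a3) a4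
    have e4 := Finset.card_union_le (a1 ∪ a2 ∪ a3 ∪ a4) a5
    have e5 := Finset.card_union_le (a1 ∪ a2 ∪ a3 ∪ a4 ∪ a5) a6
    omega
  · intro x hx
    simp only [Finset.mem_union]
    rcases hx with ((((hx | hx) | hx) | hx) | hx) | hx
    · obtain ⟨a, ha, hd⟩ := h1 x hx; exact ⟨a, by tauto, hd⟩
    · obtain ⟨a, ha, hd⟩ := h2 x hx; exact ⟨a, by tauto, hd⟩
    · obtain ⟨a, ha, hd⟩ := h3 x hx; exact ⟨a, by tauto, hd⟩
    · obtain ⟨a, ha, hd⟩ := h4 x hx; exact ⟨a, by tauto, hd⟩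
    · obtain ⟨a, ha, hd⟩ := h5 x hx; exact ⟨a, by tauto, hd⟩
    · obtain ⟨a, ha, hd⟩ := h6 x hx; exact ⟨a, by tauto, hd⟩

lemma segment_compact (p q : E2) : IsCompact (segment ℝ p q) := by
  rw [segment_eq_image_lineMap]
  exact isCompact_Icc.image AffineMap.lineMap_continuous

lemma hexL_compact : IsCompact hexL := by
  unfold hexL
  exact (((((segment_compact _ _).union (segment_compact _ _)).union (segment_compact _ _)).union
    (segment_compact _ _)).union (segment_compact _ _)).union (segment_compact _ _)

lemma hexL_fin : (μH[1] : Measure E2) hexL < ∞ := by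
  unfold hexL
  simp only [measure_union_lt_top_iff, hausdorffMeasure_segment, edist_lt_top, and_self]

instance hexP_fin : IsFiniteMeasure hexP := by
  have : IsFiniteMeasure ((μH[1] : Measure E2).restrict hexL) := ⟨by simpa using hexL_fin⟩
  unfold hexP
  exact Measure.smul_finite _ (by simp)

lemma hexP_ae : ∀ᵐ x ∂hexP, x ∈ hexL := by
  unfold hexP
  exact Measure.ae_smul_measure (ae_restrict_mem hexL_compact.measurableSet) _

lemma f_eq (α : Set E2) (hf : α.Finite) (hn : α.Nonempty) (x : E2) :
    sInf ((fun a => ‖x - a‖ ^ 2) '' α) = Metric.infDist x α ^ 2 := by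
  apply le_antisymm
  · obtain ⟨a, ha, h⟩ := hf.isCompact.exists_infDist_eq_dist hn x
    rw [h, dist_eq_norm]
    exact csInf_le ⟨0, by rintro _ ⟨b, _, rfl⟩; positivity⟩ ⟨a, ha, rfl⟩
  · apply le_csInf (hn.image _)
    rintro _ ⟨b, hb, rfl⟩
    have := Metric.infDist_le_dist_of_mem (x := x) hb
    rw [dist_eq_norm] at this
    exact pow_le_pow_left₀ Metric.infDist_nonneg this 2

lemma f_int (α : Set E2) : Integrable (fun x => Metric.infDist x α ^ 2) hexP := by
  have hc : Continuous (fun x => Metric.infDist x α ^ 2) := (Metric.continuous_infDist_pt α).pow 2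
  obtain ⟨C, hC⟩ := hexL_compact.exists_bound_of_continuousOn hc.continuousOn
  exact Integrable.of_bound hc.aestronglyMeasurable C (hexP_ae.mono hC)

lemma ball_seg (a : E2) (r : ℝ) (hr : 0 < r) :
    (μH[1] : Measure E2) (Metric.ball a r ∩ segment ℝ (pt 0 0) (pt 1 0)) ≤ ENNReal.ofReal (2*r) := by
  have hsub : Metric.ball a r ∩ segment ℝ (pt 0 0) (pt 1 0) ⊆
      segment ℝ (pt (a 0 - r) 0) (pt (a 0 + r) 0) := by
    rintro x ⟨hx, hs⟩
    rw [segment_eq_image_lineMap] at hs ⊢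
    obtain ⟨t, -, rfl⟩ := hs
    have h1 : |t - a 0| < r := by
      have := (EuclideanSpace.norm_eq (AffineMap.lineMap (pt 0 0) (pt 1 0) t - a))
      rw [Metric.mem_ball, dist_eq_norm] at hx
      have h2 := (PiLp.norm_apply_le (AffineMap.lineMap (pt 0 0) (pt 1 0) t - a) 0).trans_lt hx
      simpa [pt, AffineMap.lineMap_apply] using h2
    rw [abs_lt] at h1
    refine ⟨(t - a 0 + r) / (2*r), ⟨?_, ?_⟩, ?_⟩
    · apply div_nonneg <;> linarith
    · rw [div_le_one (by linarith)]; linarith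
    · ext i
      fin_cases i
      · simp [pt, AffineMap.lineMap_apply]; field_simp; ring
      · simp [pt, AffineMap.lineMap_apply]
  refine (measure_mono hsub).trans ?_
  rw [hausdorffMeasure_segment, edist_dist]
  apply ENNReal.ofReal_le_ofReal
  rw [EuclideanSpace.dist_eq]
  simp only [Fin.sum_univ_two, pt, Real.dist_eq, sq_abs]
  apply Real.sqrt_le_iff.2 ⟨by linarith, ?_⟩
  simp
  nlinarith

lemma seg_meas : (μH[1] : Measure E2) (segment ℝ (pt 0 0) (pt 1 0)) = 1 := by
  rw [hausdorffMeasure_segment, edist_dist, EuclideanSpace.dist_eq]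
  simp [pt, Fin.sum_univ_two, Real.dist_eq]

lemma lower_s8 (α : Set E2) (hf : α.Finite) (hn : α.Nonempty) (n : ℕ) (h : α.ncard ≤ n) (hn0 : 1 ≤ n) :
    1 / 192 / (n:ℝ)^2 ≤ ∫ x, Metric.infDist x α ^ 2 ∂hexP := by
  classical
  have hn1 : (0:ℝ) < n := by exact_mod_cast hn0
  set r : ℝ := 1 / (4*n) with hr
  have hr0 : 0 < r := by positivity
  set S := segment ℝ (pt 0 0) (pt 1 0) with hS
  set G := {x : E2 | r^2 ≤ Metric.infDist x α ^ 2} with hG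
  have hbad : (μH[1] : Measure E2) (S \ G) ≤ ENNReal.ofReal (1/2) := by
    have hsub : S \ G ⊆ ⋃ a ∈ hf.toFinset, (Metric.ball a r ∩ S) := by
      rintro x ⟨hx, hg⟩
      simp only [hG, Set.mem_ofPred_eq, not_le] at hg
      have h1 := lt_of_pow_lt_pow_left₀ 2 hr0.le hg
      obtain ⟨a, ha, hd⟩ := (Metric.infDist_lt_iff hn).1 h1
      simp only [Set.mem_iUnion]
      exact ⟨a, by simpa using ha, hd, hx⟩
    calc _ ≤ _ := measure_mono hsub
      _ ≤ ∑ a ∈ hf.toFinset, (μH[1] : Measure E2) (Metric.ball a r ∩ S) := measure_biUnion_finset_le _ _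
      _ ≤ ∑ a ∈ hf.toFinset, ENNReal.ofReal (2*r) := Finset.sum_le_sum fun a _ => ball_seg a r hr0
      _ = ENNReal.ofReal (hf.toFinset.card * (2*r)) := by
        rw [Finset.sum_const, nsmul_eq_mul, ENNReal.ofReal_mul (p := (hf.toFinset.card : ℝ)) (by positivity), ENNReal.ofReal_natCast]
      _ ≤ _ := by
        apply ENNReal.ofReal_le_ofReal
        rw [← Set.ncard_eq_toFinset_card α hf]
        have : (α.ncard : ℝ) ≤ n := by exact_mod_cast h
        calc (α.ncard : ℝ) * (2*r) ≤ n * (2*r) := by gcongr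
          _ = 1/2 := by rw [hr]; field_simp; norm_num
  have hgood : ENNReal.ofReal (1/2) ≤ (μH[1] : Measure E2) (G ∩ hexL) := by
    have h1 : (1 : ℝ≥0∞) ≤ (μH[1] : Measure E2) (G ∩ hexL) + ENNReal.ofReal (1/2) := by
      calc (1 : ℝ≥0∞) = (μH[1] : Measure E2) S := seg_meas.symm
        _ ≤ (μH[1] : Measure E2) ((G ∩ hexL) ∪ (S \ G)) := by
          apply measure_mono
          intro x hx
          by_cases hg : x ∈ G
          · left
            refine ⟨hg, ?_⟩
            unfold hexL
            simp only [Set.mem_union]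
            tauto
          · right; exact ⟨hx, hg⟩
        _ ≤ _ := (measure_union_le _ _).trans (by gcongr)
    have h2 : (1:ℝ≥0∞) = ENNReal.ofReal (1/2) + ENNReal.ofReal (1/2) := by
      rw [← ENNReal.ofReal_add (by norm_num) (by norm_num)]; norm_num
    rw [h2] at h1
    exact (ENNReal.add_le_add_iff_right ENNReal.ofReal_ne_top).1 h1
  have hP : (1:ℝ)/12 ≤ hexP.real G := by
    have hGm : MeasurableSet G :=
      measurableSet_le measurable_const ((Metric.continuous_infDist_pt α).pow 2).measurable
    have : ENNReal.ofReal (1/12) ≤ hexP G := by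
      unfold hexP
      rw [Measure.smul_apply, Measure.restrict_apply hGm, smul_eq_mul]
      calc ENNReal.ofReal (1/12) = 6⁻¹ * ENNReal.ofReal (1/2) := by
            rw [show (6:ℝ≥0∞)⁻¹ = ENNReal.ofReal (1/6) by
              rw [one_div, ENNReal.ofReal_inv_of_pos (by norm_num)]; norm_num,
              ← ENNReal.ofReal_mul (by norm_num)]
            norm_num
        _ ≤ _ := by gcongr
    exact (ENNReal.ofReal_le_iff_le_toReal (measure_ne_top _ _)).1 this
  have hM := mul_meas_ge_le_integral_of_nonneg (μ := hexP)
    (Eventually.of_forall fun x => sq_nonneg (Metric.infDist x α)) (f_int α) (r^2)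
  calc 1 / 192 / (n:ℝ)^2 = r^2 * (1/12) := by rw [hr]; field_simp; norm_num
    _ ≤ r^2 * hexP.real G := by gcongr
    _ ≤ _ := hM

lemma V_lower (n : ℕ) (hn0 : 1 ≤ n) : 1 / 192 / (n:ℝ)^2 ≤ quantErr hexP n := by
  unfold quantErr
  apply le_csInf
  · exact ⟨_, {0}, Set.finite_singleton _, Set.singleton_nonempty _, by simpa using hn0, rfl⟩
  · rintro _ ⟨α, hf, hn, h, rfl⟩
    simp_rw [f_eq α hf hn]
    exact lower_s8 α hf hn n h hn0

lemma V_upper : ∃ C : ℝ, 0 < C ∧ ∀ n : ℕ, 12 ≤ n → quantErr hexP n ≤ C / (n:ℝ)^2 := by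
  refine ⟨289 * (hexP.real Set.univ + 1), by positivity, fun n hn => ?_⟩
  obtain ⟨m, hm, h1, h2⟩ : ∃ m, 1 ≤ m ∧ 6 * (m+1) ≤ n ∧ n ≤ 17 * m := ⟨n/6 - 1, by omega, by omega, by omega⟩
  obtain ⟨α, hc, hα⟩ := hex_cover m hm
  have hm0 : (0:ℝ) < m := by exact_mod_cast hm
  have hn0 : (0:ℝ) < n := by exact_mod_cast (by omega : 0 < n)
  have hne : (α : Set E2).Nonempty := by
    obtain ⟨a, ha, -⟩ := hα (pt 0 0) (by
      unfold hexL
      simp only [Set.mem_union]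
      have := left_mem_segment ℝ (pt 0 0) (pt 1 0)
      tauto)
    exact ⟨a, ha⟩
  have hfin := α.finite_toSet
  have hle : quantErr hexP n ≤ ∫ x, Metric.infDist x (α : Set E2) ^ 2 ∂hexP := by
    unfold quantErr
    apply csInf_le
    · refine ⟨0, ?_⟩
      rintro _ ⟨β, hf, hn, h, rfl⟩
      simp_rw [f_eq β hf hn]
      positivity
    · refine ⟨α, hfin, hne, by rw [Set.ncard_coe_finset]; omega, ?_⟩
      simp_rw [f_eq _ hfin hne]
  have hb : ‖∫ x, Metric.infDist x (α : Set E2) ^ 2 ∂hexP‖ ≤ (1/(m:ℝ))^2 * hexP.real Set.univ := by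
    apply norm_integral_le_of_norm_le_const
    filter_upwards [hexP_ae] with x hx
    obtain ⟨a, ha, hd⟩ := hα x hx
    rw [Real.norm_of_nonneg (by positivity)]
    exact pow_le_pow_left₀ Metric.infDist_nonneg
      ((Metric.infDist_le_dist_of_mem (Finset.mem_coe.2 ha)).trans hd) 2
  have hmn : 1/(m:ℝ) ≤ 17 / n := by
    rw [div_le_div_iff₀ hm0 hn0]
    have : (n:ℝ) ≤ 17 * m := by exact_mod_cast h2
    linarith
  calc _ ≤ _ := hle
    _ ≤ _ := le_abs_self _
    _ ≤ _ := hb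
    _ ≤ (17/(n:ℝ))^2 * (hexP.real Set.univ + 1) := by gcongr; linarith
    _ = _ := by field_simp; norm_num

/-- The quantization dimension of the uniform distribution on the hexagon
boundary exists and equals `1`:
`lim_{n→∞} (2 log n)/(-log Vₙ(P)) = 1`. -/
theorem stmt_8 :
    Tendsto (fun n : ℕ => 2 * Real.log n / (-Real.log (quantErr hexP n)))
      atTop (nhds 1) := by
  obtain ⟨C, hC, hU⟩ := V_upper
  have hlog : Tendsto (fun n : ℕ => 2 * Real.log n) atTop atTop :=
    (Real.tendsto_log_atTop.comp tendsto_natCast_atTop_atTop).const_mul_atTop (by norm_num)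
  have key : Tendsto (fun n : ℕ => -Real.log (quantErr hexP n) / (2 * Real.log n)) atTop (nhds 1) := by
    have hl : ∀ c : ℝ, Tendsto (fun n : ℕ => 1 - c / (2 * Real.log n)) atTop (nhds 1) := by
      intro c
      simpa using tendsto_const_nhds.sub (hlog.const_div_atTop c) (a := (1:ℝ))
    have hev : ∀ᶠ n : ℕ in atTop, 12 ≤ n := eventually_ge_atTop 12
    have aux : ∀ n : ℕ, 12 ≤ n → 0 < Real.log n := fun n hn =>
      Real.log_pos (by exact_mod_cast (by omega : 1 < n))
    have aux2 : ∀ n : ℕ, 12 ≤ n → ∀ c : ℝ, 0 < c → Real.log (c / (n:ℝ)^2) = Real.log c - 2 * Real.log n := by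
      intro n hn c hc
      have : (0:ℝ) < n := by exact_mod_cast (by omega : 0 < n)
      rw [Real.log_div hc.ne' (by positivity), Real.log_pow]; norm_num
    refine tendsto_of_tendsto_of_tendsto_of_le_of_le' (hl (Real.log C)) (hl (Real.log (1/192))) ?_ ?_
    · filter_upwards [hev] with n hn
      have h0 := aux n hn
      have hn0 : (0:ℝ) < n := by exact_mod_cast (by omega : 0 < n)
      have hp : 0 < quantErr hexP n := lt_of_lt_of_le (by positivity) (V_lower n (by omega))
      have := Real.log_le_log hp (hU n hn)
      rw [aux2 n hn C hC] at this
      rw [le_div_iff₀ (by positivity), sub_mul, div_mul_cancel₀ _ (by positivity)]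
      linarith
    · filter_upwards [hev] with n hn
      have h0 := aux n hn
      have hn0 : (0:ℝ) < n := by exact_mod_cast (by omega : 0 < n)
      have := Real.log_le_log (by positivity) (V_lower n (by omega))
      rw [aux2 n hn _ (by norm_num)] at this
      rw [div_le_iff₀ (by positivity), sub_mul, div_mul_cancel₀ _ (by positivity)]
      linarith
  have := key.inv₀ one_ne_zero
  simpa only [inv_div, inv_one] using this
end
end
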